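/- For real $\mu\ge 0$ and $z>0$ let $$J_\mu(z)=\sum_{m=0}^\infty \frac{(-1)^m}{m!\,\Gamma(\mu+m+1)}\Bigl(\frac z2\Bigr)^{\mu+2m}$$ be the Bessel function of the first kind. Let $\nu\ge 1$ be real. Let $j_{\nu-1,k}$ and $\lambda^+_{\nu-1,k}$ ($k=1,2,\dots$) denote the $k$-th positive zeroes, in increasing order, of $J_{\nu-1}(z)$ and of $J_{\nu-1}(z)+J_\nu(z)$, respectively, and let $j'_{\nu-1,k}$ denote the $k$-th zero of $J_{\nu-1}'(z)$ in the usual numbering: for $\nu>1$ it is the $k$-th positive zero of $J'_{\nu-1}$, while for $\nu=1$ the zero of $J_0'$ at the origin is counted as the first one, i.e. $j'_{0,1}=0$ and $j'_{0,k+1}$ is the $k$-th positive zero of $J_0'$ for $k\ge1$. Then for every integer $k\ge 1$ $$j_{\nu-1,k+1}<\lambda^+_{\nu-1,k+1}<j'_{\nu-1,k+2}<j_{\nu-1,k+2}.$$ -/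

import Mathlib

/-- Bessel function of the first kind of real order `ν`, defined by its power series
`J_ν(z) = ∑ₘ (−1)^m / (m! Γ(ν+m+1)) (z/2)^(ν+2m)` (with real-exponent powers). -/
noncomputable def besselJ (ν z : ℝ) : ℝ :=
  ∑' m : ℕ, ((-1 : ℝ) ^ m / (Nat.factorial m * Real.Gamma (ν + m + 1))) *
    (z / 2) ^ (ν + 2 * (m : ℝ))

/-- `x` (indexed by `k ≥ 1`; the value `x 0` is irrelevant) enumerates the positive zeroes
of `f`: it is strictly increasing on indices `k ≥ 1`, each `x k` is a positive zero of `f`,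
and every positive zero of `f` is some `x k`. -/
def EnumPosZeros (f : ℝ → ℝ) (x : ℕ → ℝ) : Prop :=
  StrictMonoOn x (Set.Ici 1) ∧ (∀ k, 1 ≤ k → 0 < x k ∧ f (x k) = 0) ∧
    ∀ z : ℝ, 0 < z → f z = 0 → ∃ k, 1 ≤ k ∧ x k = z

/-- `x` (indexed by `k ≥ 1`) is the sequence `j'_{μ,k}` of zeroes of `J_μ'`, for `μ ≥ 0`, with
the usual numbering: for `μ ≠ 0` these are the positive zeroes of `J_μ'`; for `μ = 0` the
zero of `J_0'` at the origin is counted as the first one, `j'_{0,1} = 0`, and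
`j'_{0,2}, j'_{0,3}, …` are the positive zeroes of `J_0'`. -/
def EnumBesselDerivZeros (μ : ℝ) (x : ℕ → ℝ) : Prop :=
  (μ ≠ 0 → EnumPosZeros (deriv (besselJ μ)) x) ∧
    (μ = 0 → x 1 = 0 ∧ EnumPosZeros (deriv (besselJ μ)) (fun k => x (k + 1)))

/-! Write `N(z) = z² (J_μ(z)² + J_{μ+1}(z)²) - 2 μ z J_μ(z) J_{μ+1}(z)` with `μ = ν - 1 > -1`. Then
`N' = 2 z J_μ²`, and `N` is positive near `0`, hence on all of `(0, ∞)`. The quotient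
`u(z) = z J_{μ+1}(z) / J_μ(z)` has derivative `N / (z J_μ²) > 0`, so it is strictly increasing
between consecutive zeros of `J_μ`. There the zeros of `J_μ'` are the solutions of `u(z) = μ`, and
those of `J_μ + J_{μ+1}` are the solutions of `u(z) = -z`. Either equation has at most one solution
by monotonicity, and Rolle's theorem, applied to `J_μ` and to `exp (-z) z^(-μ) J_μ(z)`, provides
one. A zero `d` of `J_μ'` satisfies `N(d) = (d² - μ²) J_μ(d)²`, so `d > |μ|`; a solution `c ≥ d` of
`u(c) = -c` would give `μ = u(d) ≤ u(c) = -c ≤ -d < μ`. On the first interval `(0, j_{μ,1})` the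
function `u` is positive, so `J_μ + J_{μ+1}` has no zero there, and `J_μ'` has one exactly when
`μ > 0`, which accounts for the shift in the numbering. -/

open Filter Topology Set
open scoped Nat

section PowerSeries

lemma hasDerivAt_tsum_mul_pow {𝕜 : Type*} [RCLike 𝕜] {a : ℕ → 𝕜} {r : ℝ} {t : 𝕜}
    (ha : Summable fun m : ℕ => ‖a (m + 1) * (m + 1)‖ * r ^ m) (ht : ‖t‖ < r) :
    HasDerivAt (fun x => ∑' m, a m * x ^ m) (∑' m : ℕ, a (m + 1) * (m + 1) * t ^ m) t := by
  have hr : 0 < r := (norm_nonneg t).trans_lt ht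
  have hbound : Summable fun m : ℕ => ‖a m * m‖ * r ^ (m - 1) :=
    (summable_nat_add_iff 1).1 (by simpa using ha)
  have hterm (m : ℕ) (x : 𝕜) (hx : x ∈ Metric.ball (0 : 𝕜) r) :
      ‖a m * m * x ^ (m - 1)‖ ≤ ‖a m * m‖ * r ^ (m - 1) := by
    rw [norm_mul, norm_pow]
    gcongr
    exact (mem_ball_zero_iff.1 hx).le
  have ht' : t ∈ Metric.ball (0 : 𝕜) r := mem_ball_zero_iff.2 ht
  have hderiv : HasDerivAt (fun x => ∑' m, a m * x ^ m) (∑' m : ℕ, a m * m * t ^ (m - 1)) t :=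
    hasDerivAt_tsum_of_isPreconnected hbound Metric.isOpen_ball
      (convex_ball (0 : 𝕜) r).isPreconnected
      (fun m x _ => by simpa only [mul_assoc] using (hasDerivAt_pow m x).const_mul (a m))
      hterm (Metric.mem_ball_self hr)
      (summable_of_ne_finset_zero (s := {0}) fun m hm => by simp_all) ht'
  refine hderiv.congr_deriv ?_
  rw [(Summable.of_norm_bounded hbound fun m => hterm m t ht').tsum_eq_zero_add]
  simp

end PowerSeries

section Series

variable (μ t : ℝ) (m : ℕ)

/-- The `m`-th coefficient of `besselEntire μ`. Since `Real.Gamma` vanishes at its poles, it is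
`0` whenever `μ + m + 1` is a nonpositive integer, so that all real orders are covered. -/
noncomputable def besselCoeff : ℝ := (-1) ^ m / (m ! * Real.Gamma (μ + m + 1))

/-- The entire function `E_μ` with `J_μ(z) = (z / 2) ^ μ * E_μ((z / 2) ^ 2)`. -/
noncomputable def besselEntire : ℝ := ∑' m : ℕ, besselCoeff μ m * t ^ m

lemma besselCoeff_succ_mul : besselCoeff μ (m + 1) * (m + 1) = -besselCoeff (μ + 1) m := by
  rw [besselCoeff, besselCoeff, Nat.factorial_succ, pow_succ, Nat.cast_succ,
    show μ + (m + 1) + 1 = μ + 1 + m + 1 by ring]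
  push_cast
  field_simp

lemma besselCoeff_add_one_mul : besselCoeff (μ + 1) m * (μ + m + 1) = besselCoeff μ m := by
  have hΓ : (Real.Gamma (μ + m + 1))⁻¹ = (μ + m + 1) * (Real.Gamma (μ + m + 1 + 1))⁻¹ := by
    rcases eq_or_ne (μ + m + 1) 0 with h | h
    · rw [h, Real.Gamma_zero, inv_zero, zero_mul]
    · rw [Real.Gamma_add_one h, mul_inv, mul_inv_cancel_left₀ h]
  rw [besselCoeff, besselCoeff, div_eq_mul_inv _ (_ * Real.Gamma (μ + m + 1)), mul_inv, hΓ,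
    show μ + 1 + m + 1 = μ + m + 1 + 1 by ring]
  ring

lemma summable_norm_besselCoeff_mul_pow (r : ℝ) :
    Summable fun m => ‖besselCoeff μ m‖ * ‖r‖ ^ m := by
  have hradius := Complex.radius_regularizedHGFunSeries_eq_top (a := 0) (b := {(μ + 1 : ℂ)})
    (Nat.zero_le _)
  refine ((Complex.regularizedHGFunSeries 0 {(μ + 1 : ℂ)}).summable_norm_mul_pow (r := ‖r‖₊)
    (hradius ▸ ENNReal.coe_lt_top)).congr fun m => ?_
  have hΓ : Complex.Gamma (μ + 1 + m) = Real.Gamma (μ + m + 1) := by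
    rw [← Complex.Gamma_ofReal]
    push_cast
    ring_nf
  simp [Complex.regularizedHGFunSeries, Complex.regularizedHGFunCoeff, besselCoeff, hΓ]

lemma summable_besselCoeff_mul_pow : Summable fun m => besselCoeff μ m * t ^ m :=
  .of_norm_bounded (summable_norm_besselCoeff_mul_pow μ t) fun m => by simp

lemma hasDerivAt_besselEntire : HasDerivAt (besselEntire μ) (-besselEntire (μ + 1) t) t := by
  have hsum := summable_norm_besselCoeff_mul_pow (μ + 1) (‖t‖ + 1)
  rw [Real.norm_of_nonneg (by positivity : 0 ≤ ‖t‖ + 1)] at hsum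
  refine (hasDerivAt_tsum_mul_pow (hsum.congr fun m => ?_) (lt_add_one _)).congr_deriv ?_
  · rw [besselCoeff_succ_mul, norm_neg]
  · simp only [besselCoeff_succ_mul, neg_mul, tsum_neg, besselEntire]

lemma continuous_besselEntire : Continuous (besselEntire μ) :=
  continuous_iff_continuousAt.2 fun t => (hasDerivAt_besselEntire μ t).continuousAt

lemma besselEntire_eq_sub :
    besselEntire μ t = (μ + 1) * besselEntire (μ + 1) t - t * besselEntire (μ + 2) t := by
  have hsum₀ := summable_besselCoeff_mul_pow μ t
  have hsum₁ := summable_besselCoeff_mul_pow (μ + 1) t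
  have hsum₂ := summable_besselCoeff_mul_pow (μ + 2) t
  have hcoeff (m : ℕ) : besselCoeff μ (m + 1) * t ^ (m + 1) =
      (μ + 1) * (besselCoeff (μ + 1) (m + 1) * t ^ (m + 1)) -
        t * (besselCoeff (μ + 2) m * t ^ m) := by
    have horder := besselCoeff_add_one_mul μ (m + 1)
    have hindex := besselCoeff_succ_mul (μ + 1) m
    rw [show μ + 1 + 1 = μ + 2 by ring] at hindex
    push_cast at horder
    linear_combination -t ^ (m + 1) * horder + t ^ (m + 1) * hindex
  rw [besselEntire, besselEntire, besselEntire, hsum₀.tsum_eq_zero_add, hsum₁.tsum_eq_zero_add,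
    tsum_congr hcoeff,
    (((summable_nat_add_iff 1).2 hsum₁).mul_left _).tsum_sub (hsum₂.mul_left _),
    tsum_mul_left, tsum_mul_left, ← besselCoeff_add_one_mul μ 0]
  push_cast
  ring

lemma besselEntire_zero : besselEntire μ 0 = (Real.Gamma (μ + 1))⁻¹ := by
  rw [besselEntire, tsum_eq_single 0 fun m hm => by simp [hm]]
  simp [besselCoeff]

lemma besselEntire_zero_pos {μ : ℝ} (hμ : -1 < μ) : 0 < besselEntire μ 0 := by
  rw [besselEntire_zero]
  exact inv_pos.2 (Real.Gamma_pos_of_pos (by linarith))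

end Series

section Derivatives

variable (μ : ℝ) {z : ℝ}

lemma besselJ_eq (hz : 0 < z) : besselJ μ z = (z / 2) ^ μ * besselEntire μ ((z / 2) ^ 2) := by
  rw [besselJ, besselEntire, ← tsum_mul_left]
  refine tsum_congr fun m => ?_
  have hpow : (z / 2) ^ (μ + 2 * m) = (z / 2) ^ μ * ((z / 2) ^ 2) ^ m := by
    rw [Real.rpow_add (by positivity), Real.rpow_mul (by positivity), Real.rpow_natCast,
      Real.rpow_two]
  rw [hpow, besselCoeff]
  ring

lemma besselJ_add_besselJ_add_two (hz : 0 < z) :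
    besselJ μ z + besselJ (μ + 2) z = 2 * (μ + 1) / z * besselJ (μ + 1) z := by
  have hz2 : z / 2 ≠ 0 := by positivity
  rw [besselJ_eq μ hz, besselJ_eq (μ + 1) hz, besselJ_eq (μ + 2) hz, besselEntire_eq_sub,
    Real.rpow_add_one hz2, Real.rpow_add (by positivity), Real.rpow_two]
  field_simp
  ring

lemma hasDerivAt_besselJ (hz : 0 < z) :
    HasDerivAt (besselJ μ) (μ / z * besselJ μ z - besselJ (μ + 1) z) z := by
  have hhalf : HasDerivAt (fun y : ℝ => y / 2) (1 / 2) z := (hasDerivAt_id z).div_const 2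
  have hz2 : z / 2 ≠ 0 := by positivity
  have hprod := (hhalf.rpow_const (p := μ) (Or.inl hz2)).mul
    ((hasDerivAt_besselEntire μ ((z / 2) ^ 2)).comp z (hhalf.pow 2))
  have hJ : HasDerivAt (besselJ μ) _ z := hprod.congr_of_eventuallyEq
    ((lt_mem_nhds hz).mono fun y hy => besselJ_eq μ hy)
  refine hJ.congr_deriv ?_
  rw [besselJ_eq μ hz, besselJ_eq (μ + 1) hz, Real.rpow_add_one hz2, Real.rpow_sub_one hz2]
  simp only [Function.comp_apply, Pi.pow_apply]
  field_simp
  push_cast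
  ring

lemma hasDerivAt_besselJ_add_one (hz : 0 < z) :
    HasDerivAt (besselJ (μ + 1)) (besselJ μ z - (μ + 1) / z * besselJ (μ + 1) z) z := by
  refine (hasDerivAt_besselJ (μ + 1) hz).congr_deriv ?_
  rw [show μ + 1 + 1 = μ + 2 by ring]
  linear_combination -besselJ_add_besselJ_add_two μ hz

lemma deriv_besselJ (hz : 0 < z) :
    deriv (besselJ μ) z = μ / z * besselJ μ z - besselJ (μ + 1) z :=
  (hasDerivAt_besselJ μ hz).deriv

end Derivatives

section Lommel

variable {μ z : ℝ}

/-- The Lommel integral `2 ∫₀ᶻ x J_μ(x)² dx` in closed form. Its sign governs the monotonicity of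
`besselRatio` and the simplicity of the zeros of `J_μ`. -/
noncomputable def besselLommel (μ z : ℝ) : ℝ :=
  z ^ 2 * (besselJ μ z ^ 2 + besselJ (μ + 1) z ^ 2) - 2 * μ * z * besselJ μ z * besselJ (μ + 1) z

lemma hasDerivAt_besselLommel (μ : ℝ) (hz : 0 < z) :
    HasDerivAt (besselLommel μ) (2 * z * besselJ μ z ^ 2) z := by
  have hJ := hasDerivAt_besselJ μ hz
  have hJ' := hasDerivAt_besselJ_add_one μ hz
  refine ((((hasDerivAt_id z).fun_pow 2).fun_mul ((hJ.fun_pow 2).fun_add (hJ'.fun_pow 2))).fun_sub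
    ((((hasDerivAt_id z).const_mul (2 * μ)).fun_mul hJ).fun_mul hJ')).congr_deriv ?_
  simp only [id_eq]
  field_simp
  push_cast
  ring

lemma monotoneOn_besselLommel (μ : ℝ) : MonotoneOn (besselLommel μ) (Ioi 0) := by
  refine monotoneOn_of_hasDerivWithinAt_nonneg (convex_Ioi 0)
    (fun z hz => (hasDerivAt_besselLommel μ hz).continuousAt.continuousWithinAt)
    (fun z hz => (hasDerivAt_besselLommel μ (interior_subset hz)).hasDerivWithinAt) fun z hz => ?_
  have hz₀ : 0 < z := interior_subset hz
  positivity

lemma besselLommel_eq (μ : ℝ) (hz : 0 < z) :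
    besselLommel μ z = (z * (z / 2) ^ μ) ^ 2 * (besselEntire μ ((z / 2) ^ 2) ^ 2 +
      (z / 2) ^ 2 * besselEntire (μ + 1) ((z / 2) ^ 2) ^ 2 -
        μ * besselEntire μ ((z / 2) ^ 2) * besselEntire (μ + 1) ((z / 2) ^ 2)) := by
  rw [besselLommel, besselJ_eq μ hz, besselJ_eq (μ + 1) hz, Real.rpow_add_one (by positivity)]
  ring

lemma eventually_besselLommel_pos (hμ : -1 < μ) : ∀ᶠ z in 𝓝[>] 0, 0 < besselLommel μ z := by
  have hcont₀ := continuous_besselEntire μ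
  have hcont₁ := continuous_besselEntire (μ + 1)
  have hE₀ : besselEntire μ 0 = (μ + 1) * besselEntire (μ + 1) 0 := by
    simpa using besselEntire_eq_sub μ 0
  have hpos : 0 < besselEntire μ 0 ^ 2 - μ * besselEntire μ 0 * besselEntire (μ + 1) 0 :=
    calc 0 < besselEntire μ 0 * besselEntire (μ + 1) 0 :=
          mul_pos (besselEntire_zero_pos hμ) (besselEntire_zero_pos (by linarith))
      _ = _ := by linear_combination -besselEntire μ 0 * hE₀
  have hlim : Continuous fun z : ℝ => besselEntire μ ((z / 2) ^ 2) ^ 2 +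
      (z / 2) ^ 2 * besselEntire (μ + 1) ((z / 2) ^ 2) ^ 2 -
        μ * besselEntire μ ((z / 2) ^ 2) * besselEntire (μ + 1) ((z / 2) ^ 2) := by fun_prop
  have hnear := (hlim.tendsto 0).eventually_const_lt (u := 0) (by simpa using hpos)
  filter_upwards [nhdsWithin_le_nhds hnear, self_mem_nhdsWithin] with z hz (hz₀ : 0 < z)
  rw [besselLommel_eq μ hz₀]
  positivity

lemma besselLommel_pos (hμ : -1 < μ) (hz : 0 < z) : 0 < besselLommel μ z := by
  obtain ⟨y, hy, hyz⟩ := ((eventually_besselLommel_pos hμ).and (Ioo_mem_nhdsGT hz)).exists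
  exact hy.trans_le (monotoneOn_besselLommel μ hyz.1 hz hyz.2.le)

lemma besselJ_add_one_ne_zero_of_besselJ_eq_zero (hμ : -1 < μ) (hz : 0 < z)
    (h : besselJ μ z = 0) : besselJ (μ + 1) z ≠ 0 := fun h' =>
  (besselLommel_pos hμ hz).ne' (by simp [besselLommel, h, h'])

lemma deriv_besselJ_ne_zero_of_besselJ_eq_zero (hμ : -1 < μ) (hz : 0 < z)
    (h : besselJ μ z = 0) : deriv (besselJ μ) z ≠ 0 := by
  simpa [deriv_besselJ μ hz, h] using besselJ_add_one_ne_zero_of_besselJ_eq_zero hμ hz h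

lemma besselJ_add_besselJ_add_one_ne_zero_of_besselJ_eq_zero (hμ : -1 < μ) (hz : 0 < z)
    (h : besselJ μ z = 0) : besselJ μ z + besselJ (μ + 1) z ≠ 0 := by
  simpa [h] using besselJ_add_one_ne_zero_of_besselJ_eq_zero hμ hz h

lemma besselLommel_eq_deriv (μ : ℝ) (hz : 0 < z) :
    besselLommel μ z = (z * deriv (besselJ μ) z) ^ 2 + (z ^ 2 - μ ^ 2) * besselJ μ z ^ 2 := by
  rw [besselLommel, deriv_besselJ μ hz]
  field_simp
  ring

lemma abs_lt_of_deriv_besselJ_eq_zero (hμ : -1 < μ) (hz : 0 < z)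
    (h : deriv (besselJ μ) z = 0) : |μ| < z := by
  have hpos : 0 < (z ^ 2 - μ ^ 2) * besselJ μ z ^ 2 := by
    simpa [besselLommel_eq_deriv μ hz, h] using besselLommel_pos hμ hz
  have hsq : μ ^ 2 < z ^ 2 := sub_pos.1 (pos_of_mul_pos_left hpos (sq_nonneg _))
  exact abs_lt_of_sq_lt_sq hsq hz.le

end Lommel

section Ratio

variable {μ p q z : ℝ}

/-- The quotient `u(z) = z J_{μ+1}(z) / J_μ(z)`. Away from the zeros of `J_μ`, where it takes the
junk value `0`, it turns `J_μ' = 0` into `u(z) = μ` and `J_μ + J_{μ+1} = 0` into `u(z) = -z`. -/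
noncomputable def besselRatio (μ z : ℝ) : ℝ := z * besselJ (μ + 1) z / besselJ μ z

lemma hasDerivAt_besselRatio (hz : 0 < z) (hne : besselJ μ z ≠ 0) :
    HasDerivAt (besselRatio μ) (besselLommel μ z / (z * besselJ μ z ^ 2)) z := by
  refine (((hasDerivAt_id z).fun_mul (hasDerivAt_besselJ_add_one μ hz)).fun_div
    (hasDerivAt_besselJ μ hz) hne).congr_deriv ?_
  simp only [id_eq, besselLommel]
  field_simp
  ring

lemma strictMonoOn_besselRatio (hμ : -1 < μ) (hp : 0 ≤ p) (hne : ∀ z ∈ Ioo p q, besselJ μ z ≠ 0) :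
    StrictMonoOn (besselRatio μ) (Ioo p q) := by
  have hderiv : ∀ z ∈ Ioo p q, HasDerivAt (besselRatio μ) _ z := fun z hz =>
    hasDerivAt_besselRatio (hp.trans_lt hz.1) (hne z hz)
  refine strictMonoOn_of_deriv_pos (convex_Ioo p q)
    (fun z hz => (hderiv z hz).continuousAt.continuousWithinAt) fun z hz => ?_
  have hz' := interior_subset hz
  have hz₀ : 0 < z := hp.trans_lt hz'.1
  rw [(hderiv z hz').deriv]
  have hLommel := besselLommel_pos hμ hz₀
  have hsq := sq_pos_of_ne_zero (hne z hz')
  positivity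

lemma deriv_besselJ_eq_zero_iff (hz : 0 < z) (hne : besselJ μ z ≠ 0) :
    deriv (besselJ μ) z = 0 ↔ besselRatio μ z = μ := by
  rw [deriv_besselJ μ hz, besselRatio, div_eq_iff hne]
  constructor <;> intro h
  · field_simp at h
    linear_combination -h
  · field_simp
    linear_combination -h

lemma besselJ_add_besselJ_add_one_eq_zero_iff (hz : 0 < z) (hne : besselJ μ z ≠ 0) :
    besselJ μ z + besselJ (μ + 1) z = 0 ↔ besselRatio μ z = -z := by
  rw [besselRatio, div_eq_iff hne, neg_mul, ← mul_neg, mul_right_inj' hz.ne',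
    eq_neg_iff_add_eq_zero, add_comm]

lemma tendsto_besselRatio_nhdsGT_zero (hμ : -1 < μ) :
    Tendsto (besselRatio μ) (𝓝[>] 0) (𝓝 0) := by
  have hE := (besselEntire_zero_pos hμ).ne'
  have hlim : Tendsto (fun z : ℝ => z ^ 2 / 2 * besselEntire (μ + 1) ((z / 2) ^ 2) /
      besselEntire μ ((z / 2) ^ 2)) (𝓝 0) (𝓝 0) := by
    have hcont₀ := continuous_besselEntire μ
    have hcont₁ := continuous_besselEntire (μ + 1)
    have hquot : ContinuousAt (fun z : ℝ => z ^ 2 / 2 * besselEntire (μ + 1) ((z / 2) ^ 2) /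
        besselEntire μ ((z / 2) ^ 2)) 0 :=
      .div (by fun_prop) (by fun_prop) (by simpa using hE)
    simpa using hquot.tendsto
  refine (tendsto_nhdsWithin_of_tendsto_nhds hlim).congr' ?_
  filter_upwards [self_mem_nhdsWithin] with z (hz : 0 < z)
  have hpow : (z / 2) ^ μ ≠ 0 := by positivity
  rw [besselRatio, besselJ_eq μ hz, besselJ_eq (μ + 1) hz, Real.rpow_add_one (by positivity)]
  field_simp

lemma besselRatio_pos (hμ : -1 < μ) (hne : ∀ z ∈ Ioo 0 q, besselJ μ z ≠ 0) (hz : z ∈ Ioo 0 q) :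
    0 < besselRatio μ z := by
  have hmono := strictMonoOn_besselRatio hμ le_rfl hne
  obtain ⟨y, hy₀, hyz⟩ := exists_between hz.1
  have hy : y ∈ Ioo 0 q := ⟨hy₀, hyz.trans hz.2⟩
  have hlim : 0 ≤ besselRatio μ y := by
    refine le_of_tendsto (tendsto_besselRatio_nhdsGT_zero hμ) ?_
    filter_upwards [Ioo_mem_nhdsGT hy₀] with x hx
    exact (hmono ⟨hx.1, hx.2.trans hy.2⟩ hy hx.2).le
  exact hlim.trans_lt (hmono hy hz hyz)

end Ratio

section Interlacing

variable {μ p q : ℝ}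

lemma tendsto_besselJ_nhdsGT_zero (hμ : 0 < μ) : Tendsto (besselJ μ) (𝓝[>] 0) (𝓝 0) := by
  have hpow : Continuous fun z : ℝ => (z / 2) ^ μ :=
    (by fun_prop : Continuous fun z : ℝ => z / 2).rpow_const fun _ => Or.inr hμ.le
  have hE := continuous_besselEntire μ
  have hprod : Continuous fun z : ℝ => (z / 2) ^ μ * besselEntire μ ((z / 2) ^ 2) := by fun_prop
  have hlim := hprod.tendsto 0
  rw [zero_div, Real.zero_rpow hμ.ne', zero_mul] at hlim
  refine (tendsto_nhdsWithin_of_tendsto_nhds hlim).congr' ?_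
  filter_upwards [self_mem_nhdsWithin] with z hz
  exact (besselJ_eq μ hz).symm

lemma existsUnique_deriv_besselJ_eq_zero (hμ : -1 < μ) (hp : 0 ≤ p) (hpq : p < q)
    (hp₀ : Tendsto (besselJ μ) (𝓝[>] p) (𝓝 0)) (hq₀ : besselJ μ q = 0)
    (hne : ∀ z ∈ Ioo p q, besselJ μ z ≠ 0) :
    ∃! z, z ∈ Ioo p q ∧ deriv (besselJ μ) z = 0 := by
  have hpos : ∀ z ∈ Ioo p q, 0 < z := fun z hz => hp.trans_lt hz.1
  have hq : Tendsto (besselJ μ) (𝓝[<] q) (𝓝 0) :=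
    hq₀ ▸ tendsto_nhdsWithin_of_tendsto_nhds
      (hasDerivAt_besselJ μ (hp.trans_lt hpq)).continuousAt.tendsto
  obtain ⟨d, hd, hd₀⟩ := exists_hasDerivAt_eq_zero' hpq hp₀ hq
    fun z hz => (hasDerivAt_besselJ μ (hpos z hz)).differentiableAt.hasDerivAt
  refine ⟨d, ⟨hd, hd₀⟩, fun z ⟨hz, hz₀⟩ => (strictMonoOn_besselRatio hμ hp hne).injOn hz hd ?_⟩
  rw [(deriv_besselJ_eq_zero_iff (hpos z hz) (hne z hz)).1 hz₀,
    (deriv_besselJ_eq_zero_iff (hpos d hd) (hne d hd)).1 hd₀]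

lemma hasDerivAt_exp_mul_rpow_mul_besselJ (μ : ℝ) {z : ℝ} (hz : 0 < z) :
    HasDerivAt (fun x => Real.exp (-x) * x ^ (-μ) * besselJ μ x)
      (-(Real.exp (-z) * z ^ (-μ)) * (besselJ μ z + besselJ (μ + 1) z)) z := by
  have hexp : HasDerivAt (fun x : ℝ => Real.exp (-x)) (-Real.exp (-z)) z := by
    simpa using (hasDerivAt_neg z).exp
  refine ((hexp.fun_mul (Real.hasDerivAt_rpow_const (Or.inl hz.ne'))).fun_mul
    (hasDerivAt_besselJ μ hz)).congr_deriv ?_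
  rw [Real.rpow_sub_one hz.ne']
  ring

lemma existsUnique_besselJ_add_besselJ_add_one_eq_zero (hμ : -1 < μ) (hp : 0 < p) (hpq : p < q)
    (hp₀ : besselJ μ p = 0) (hq₀ : besselJ μ q = 0) (hne : ∀ z ∈ Ioo p q, besselJ μ z ≠ 0) :
    ∃! z, z ∈ Ioo p q ∧ besselJ μ z + besselJ (μ + 1) z = 0 := by
  have hpos : ∀ z ∈ Icc p q, 0 < z := fun z hz => hp.trans_le hz.1
  have hmono : StrictMonoOn (fun z => besselRatio μ z + z) (Ioo p q) :=
    (strictMonoOn_besselRatio hμ hp.le hne).add (strictMono_id.strictMonoOn _)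
  have hratio : ∀ z ∈ Ioo p q, besselJ μ z + besselJ (μ + 1) z = 0 → besselRatio μ z + z = 0 :=
    fun z hz hz₀ => eq_neg_iff_add_eq_zero.1
      ((besselJ_add_besselJ_add_one_eq_zero_iff (hp.trans hz.1) (hne z hz)).1 hz₀)
  obtain ⟨c, hc, hc₀⟩ := exists_hasDerivAt_eq_zero hpq
    (fun z hz =>
      (hasDerivAt_exp_mul_rpow_mul_besselJ μ (hpos z hz)).continuousAt.continuousWithinAt)
    (by simp [hp₀, hq₀])
    fun z hz => hasDerivAt_exp_mul_rpow_mul_besselJ μ (hpos z (Ioo_subset_Icc_self hz))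
  have hweight : -(Real.exp (-c) * c ^ (-μ)) ≠ 0 :=
    neg_ne_zero.2 (mul_pos (Real.exp_pos _) (Real.rpow_pos_of_pos (hp.trans hc.1) _)).ne'
  have hc₁ := (mul_eq_zero.1 hc₀).resolve_left hweight
  refine ⟨c, ⟨hc, hc₁⟩, fun z ⟨hz, hz₀⟩ => hmono.injOn hz hc ?_⟩
  exact (hratio z hz hz₀).trans (hratio c hc hc₁).symm

lemma lt_of_besselJ_add_besselJ_add_one_eq_zero_of_deriv_besselJ_eq_zero {c d : ℝ} (hμ : -1 < μ)
    (hp : 0 ≤ p) (hne : ∀ z ∈ Ioo p q, besselJ μ z ≠ 0) (hc : c ∈ Ioo p q) (hd : d ∈ Ioo p q)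
    (hc₀ : besselJ μ c + besselJ (μ + 1) c = 0) (hd₀ : deriv (besselJ μ) d = 0) : c < d := by
  have hd_pos : 0 < d := hp.trans_lt hd.1
  have hμd : -μ < d := (neg_le_abs μ).trans_lt (abs_lt_of_deriv_besselJ_eq_zero hμ hd_pos hd₀)
  by_contra! hdc
  have hratio := (strictMonoOn_besselRatio hμ hp hne).monotoneOn hd hc hdc
  rw [(deriv_besselJ_eq_zero_iff hd_pos (hne d hd)).1 hd₀,
    (besselJ_add_besselJ_add_one_eq_zero_iff (hp.trans_lt hc.1) (hne c hc)).1 hc₀] at hratio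
  linarith

lemma besselJ_add_besselJ_add_one_ne_zero (hμ : -1 < μ) (hq₀ : besselJ μ q = 0)
    (hne : ∀ z ∈ Ioo 0 q, besselJ μ z ≠ 0) :
    ∀ z ∈ Ioc 0 q, besselJ μ z + besselJ (μ + 1) z ≠ 0 := by
  intro z hz hz₀
  rcases hz.2.eq_or_lt with rfl | hzq
  · exact besselJ_add_besselJ_add_one_ne_zero_of_besselJ_eq_zero hμ hz.1 hq₀ hz₀
  · have hratio := (besselJ_add_besselJ_add_one_eq_zero_iff hz.1 (hne z ⟨hz.1, hzq⟩)).1 hz₀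
    linarith [besselRatio_pos hμ hne ⟨hz.1, hzq⟩, hz.1]

lemma deriv_besselJ_ne_zero (hμ : -1 < μ) (hμ₀ : μ ≤ 0) (hq₀ : besselJ μ q = 0)
    (hne : ∀ z ∈ Ioo 0 q, besselJ μ z ≠ 0) : ∀ z ∈ Ioc 0 q, deriv (besselJ μ) z ≠ 0 := by
  intro z hz hz₀
  rcases hz.2.eq_or_lt with rfl | hzq
  · exact deriv_besselJ_ne_zero_of_besselJ_eq_zero hμ hz.1 hq₀ hz₀
  · have hratio := (deriv_besselJ_eq_zero_iff hz.1 (hne z ⟨hz.1, hzq⟩)).1 hz₀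
    linarith [besselRatio_pos hμ hne ⟨hz.1, hzq⟩]

end Interlacing

namespace EnumPosZeros

variable {F : ℝ → ℝ} {x p : ℕ → ℝ}

lemma pos (hx : EnumPosZeros F x) (k : ℕ) : 0 < x (k + 1) := (hx.2.1 (k + 1) (by lia)).1

lemma apply_eq_zero (hx : EnumPosZeros F x) (k : ℕ) : F (x (k + 1)) = 0 :=
  (hx.2.1 (k + 1) (by lia)).2

lemma strictMono_succ (hx : EnumPosZeros F x) : StrictMono fun k => x (k + 1) :=
  fun _ _ h => hx.1 (by simp) (by simp) (by lia)

lemma exists_eq (hx : EnumPosZeros F x) {z : ℝ} (hz : 0 < z) (hz₀ : F z = 0) :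
    ∃ k, x (k + 1) = z := by
  obtain ⟨k, hk, rfl⟩ := hx.2.2 z hz hz₀
  exact ⟨k - 1, by rw [Nat.sub_add_cancel hk]⟩

lemma ne_zero_of_mem_Ioo_zero (hx : EnumPosZeros F x) : ∀ z ∈ Ioo 0 (x 1), F z ≠ 0 := by
  rintro z ⟨hz, hz₁⟩ hz₀
  obtain ⟨m, rfl⟩ := hx.exists_eq hz hz₀
  exact hz₁.not_ge (hx.strictMono_succ.monotone m.zero_le)

lemma ne_zero_of_mem_Ioo (hx : EnumPosZeros F x) (k : ℕ) :
    ∀ z ∈ Ioo (x (k + 1)) (x (k + 2)), F z ≠ 0 := by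
  rintro z ⟨hkz, hzk⟩ hz₀
  obtain ⟨m, rfl⟩ := hx.exists_eq ((hx.pos k).trans hkz) hz₀
  have hkm := hx.strictMono_succ.lt_iff_lt.1 hkz
  have hmk := hx.strictMono_succ.lt_iff_lt.1 hzk
  lia

lemma mem_Ioo (hx : EnumPosZeros F x) (hp : 0 ≤ p 0) (hinit : ∀ z ∈ Ioc 0 (p 0), F z ≠ 0)
    (hcell : ∀ k, ∃! z, z ∈ Ioo (p k) (p (k + 1)) ∧ F z = 0) (hnode : ∀ k, F (p (k + 1)) ≠ 0)
    (k : ℕ) : x (k + 1) ∈ Ioo (p k) (p (k + 1)) := by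
  have hp_mono : Monotone p := monotone_nat_of_le_succ fun k => by
    obtain ⟨z, ⟨hz, -⟩, -⟩ := hcell k
    exact (hz.1.trans hz.2).le
  have hp_nonneg (k : ℕ) : 0 ≤ p k := hp.trans (hp_mono k.zero_le)
  obtain ⟨z, ⟨hz, hz₀⟩, -⟩ := hcell k
  obtain ⟨m, rfl⟩ := hx.exists_eq ((hp_nonneg k).trans_lt hz.1) hz₀
  induction k generalizing m with
  | zero =>
    refine ⟨?_, (hx.strictMono_succ.monotone m.zero_le).trans_lt hz.2⟩
    by_contra! hle
    exact hinit _ ⟨hx.pos 0, hle⟩ (hx.apply_eq_zero 0)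
  | succ k ih =>
    obtain ⟨y, ⟨hy, hy₀⟩, hunique⟩ := hcell k
    obtain ⟨n, rfl⟩ := hx.exists_eq ((hp_nonneg k).trans_lt hy.1) hy₀
    have hprev := ih n hy hy₀
    have hkm : k < m := hx.strictMono_succ.lt_iff_lt.1 (hprev.2.trans hz.1)
    refine ⟨?_, (hx.strictMono_succ.monotone hkm).trans_lt hz.2⟩
    have hstep : x (k + 1) < x (k + 1 + 1) := hx.strictMono_succ k.lt_succ_self
    by_contra! hle
    rcases hle.eq_or_lt with heq | hlt
    · exact hnode k (heq ▸ hx.apply_eq_zero (k + 1))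
    · have hnext := hunique _ ⟨⟨hprev.1.trans hstep, hlt⟩, hx.apply_eq_zero (k + 1)⟩
      exact hstep.ne ((hunique _ ⟨hprev, hx.apply_eq_zero k⟩).trans hnext.symm)

end EnumPosZeros

section BesselZeros

variable {μ : ℝ} {j x : ℕ → ℝ}

lemma besselJ_add_besselJ_add_one_zero_mem_Ioo (hμ : -1 < μ) (hj : EnumPosZeros (besselJ μ) j)
    (hx : EnumPosZeros (fun z => besselJ μ z + besselJ (μ + 1) z) x) (k : ℕ) :
    x (k + 1) ∈ Ioo (j (k + 1)) (j (k + 2)) :=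
  hx.mem_Ioo (p := fun k => j (k + 1)) (hj.pos 0).le
    (besselJ_add_besselJ_add_one_ne_zero hμ (hj.apply_eq_zero 0) hj.ne_zero_of_mem_Ioo_zero)
    (fun k => existsUnique_besselJ_add_besselJ_add_one_eq_zero hμ (hj.pos k)
      (hj.strictMono_succ k.lt_succ_self) (hj.apply_eq_zero k) (hj.apply_eq_zero (k + 1))
      (hj.ne_zero_of_mem_Ioo k))
    (fun k => besselJ_add_besselJ_add_one_ne_zero_of_besselJ_eq_zero hμ (hj.pos (k + 1))
      (hj.apply_eq_zero (k + 1))) k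

lemma existsUnique_deriv_besselJ_eq_zero_mem_Ioo (hμ : -1 < μ) (hj : EnumPosZeros (besselJ μ) j)
    (k : ℕ) : ∃! z, z ∈ Ioo (j (k + 1)) (j (k + 2)) ∧ deriv (besselJ μ) z = 0 := by
  have hlim : Tendsto (besselJ μ) (𝓝[>] j (k + 1)) (𝓝 0) :=
    hj.apply_eq_zero k ▸ tendsto_nhdsWithin_of_tendsto_nhds
      (hasDerivAt_besselJ μ (hj.pos k)).continuousAt.tendsto
  exact existsUnique_deriv_besselJ_eq_zero hμ (hj.pos k).le (hj.strictMono_succ k.lt_succ_self)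
    hlim (hj.apply_eq_zero (k + 1)) (hj.ne_zero_of_mem_Ioo k)

lemma deriv_besselJ_zero_mem_Ioo_of_nonpos (hμ : -1 < μ) (hμ₀ : μ ≤ 0)
    (hj : EnumPosZeros (besselJ μ) j) (hx : EnumPosZeros (deriv (besselJ μ)) x) (k : ℕ) :
    x (k + 1) ∈ Ioo (j (k + 1)) (j (k + 2)) :=
  hx.mem_Ioo (p := fun k => j (k + 1)) (hj.pos 0).le
    (deriv_besselJ_ne_zero hμ hμ₀ (hj.apply_eq_zero 0) hj.ne_zero_of_mem_Ioo_zero)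
    (existsUnique_deriv_besselJ_eq_zero_mem_Ioo hμ hj)
    (fun k => deriv_besselJ_ne_zero_of_besselJ_eq_zero hμ (hj.pos (k + 1))
      (hj.apply_eq_zero (k + 1))) k

lemma deriv_besselJ_zero_mem_Ioo_of_pos (hμ : 0 < μ) (hj : EnumPosZeros (besselJ μ) j)
    (hx : EnumPosZeros (deriv (besselJ μ)) x) (k : ℕ) :
    x (k + 2) ∈ Ioo (j (k + 1)) (j (k + 2)) := by
  have hμ₁ : -1 < μ := by linarith
  let p : ℕ → ℝ := fun k => if k = 0 then 0 else j k
  have hcell : ∀ k, ∃! z, z ∈ Ioo (p k) (p (k + 1)) ∧ deriv (besselJ μ) z = 0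
    | 0 => existsUnique_deriv_besselJ_eq_zero hμ₁ le_rfl (hj.pos 0)
        (tendsto_besselJ_nhdsGT_zero hμ) (hj.apply_eq_zero 0) hj.ne_zero_of_mem_Ioo_zero
    | k + 1 => existsUnique_deriv_besselJ_eq_zero_mem_Ioo hμ₁ hj k
  exact hx.mem_Ioo (p := p) le_rfl (by simp [p]) hcell
    (fun k => deriv_besselJ_ne_zero_of_besselJ_eq_zero hμ₁ (hj.pos k) (hj.apply_eq_zero k)) (k + 1)

end BesselZeros

theorem stmt14_general {ν : ℝ} (hν : 0 < ν) {j j' lam : ℕ → ℝ}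
    (hj : EnumPosZeros (besselJ (ν - 1)) j)
    (hj'_pos : 1 < ν → EnumPosZeros (deriv (besselJ (ν - 1))) j')
    (hj'_nonpos : ν ≤ 1 → EnumPosZeros (deriv (besselJ (ν - 1))) fun k => j' (k + 1))
    (hlam : EnumPosZeros (fun z => besselJ (ν - 1) z + besselJ ν z) lam) (k : ℕ) :
    j (k + 1) < lam (k + 1) ∧ lam (k + 1) < j' (k + 2) ∧ j' (k + 2) < j (k + 2) := by
  obtain ⟨μ, rfl⟩ : ∃ μ, ν = μ + 1 := ⟨ν - 1, by ring⟩
  rw [add_sub_cancel_right] at *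
  have hμ : -1 < μ := by linarith
  have hlam_mem := besselJ_add_besselJ_add_one_zero_mem_Ioo hμ hj hlam k
  obtain ⟨hj'_mem, hj'_zero⟩ :
      j' (k + 2) ∈ Ioo (j (k + 1)) (j (k + 2)) ∧ deriv (besselJ μ) (j' (k + 2)) = 0 := by
    rcases lt_or_ge 0 μ with hμ₀ | hμ₀
    · have hj' := hj'_pos (by linarith)
      exact ⟨deriv_besselJ_zero_mem_Ioo_of_pos hμ₀ hj hj' k, hj'.apply_eq_zero (k + 1)⟩
    · have hj' := hj'_nonpos (by linarith)
      exact ⟨deriv_besselJ_zero_mem_Ioo_of_nonpos hμ hμ₀ hj hj' k, hj'.apply_eq_zero k⟩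
  have hlt := lt_of_besselJ_add_besselJ_add_one_eq_zero_of_deriv_besselJ_eq_zero hμ (hj.pos k).le
    (hj.ne_zero_of_mem_Ioo k) hlam_mem hj'_mem (hlam.apply_eq_zero k) hj'_zero
  exact ⟨hlam_mem.1, hlt, hj'_mem.2⟩

/-- For `ν ≥ 1` and every `k ≥ 1`,
`j_{ν−1,k+1} < λ⁺_{ν−1,k+1} < j′_{ν−1,k+2} < j_{ν−1,k+2}`. -/
theorem stmt14 (ν : ℝ) (hν : 1 ≤ ν)
    (j j' lam : ℕ → ℝ)
    (hj : EnumPosZeros (besselJ (ν - 1)) j)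
    (hj' : EnumBesselDerivZeros (ν - 1) j')
    (hlam : EnumPosZeros (fun z => besselJ (ν - 1) z + besselJ ν z) lam)
    (k : ℕ) (hk : 1 ≤ k) :
    j (k + 1) < lam (k + 1) ∧ lam (k + 1) < j' (k + 2) ∧ j' (k + 2) < j (k + 2) := by
  exact stmt14_general (by linarith) hj (fun h => hj'.1 (by linarith))
    (fun h => (hj'.2 (by linarith)).2) hlam k
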